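/- Let α, β ∈ ℂ with Re(α) > Re(β) > 0, let φ ∈ C¹[a,b] with φ′ > 0 on [a,b], and let f ∈ L¹(a,b). Then D_{a+}^{β,φ} I_{a+}^{α,φ} f(x) = I_{a+}^{α−β,φ} f(x) holds for almost every x ∈ [a,b]. -/

import Mathlib

open MeasureTheory Filter Set Finset Topology

noncomputable section

namespace FracDE

/-- The `φ`-derivative operator `f ↦ (1/φ′) f′`. -/
def phiD (φ : ℝ → ℝ) (f : ℝ → ℂ) : ℝ → ℂ :=
  fun x => ((deriv φ x : ℝ) : ℂ)⁻¹ * deriv f x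

/-- The Riemann–Liouville fractional integral of order `α` with respect to `φ`, based at `a`:
`(I_{a+}^{α,φ} f)(x) = (1/Γ(α)) ∫_a^x φ′(t) (φ(x) − φ(t))^{α−1} f(t) dt`. -/
def RLI (α : ℂ) (a : ℝ) (φ : ℝ → ℝ) (f : ℝ → ℂ) (x : ℝ) : ℂ :=
  (Complex.Gamma α)⁻¹ *
    ∫ t in a..x, ((deriv φ t : ℝ) : ℂ) * (((φ x - φ t : ℝ) : ℂ) ^ (α - 1)) * f t

/-- `n = ⌊Re α⌋ + 1`. -/
def rlN (α : ℂ) : ℕ := ⌊α.re⌋.toNat + 1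

/-- The Riemann–Liouville fractional derivative of order `α` with respect to `φ`:
`(D_{a+}^{α,φ} f)(x) = ((1/φ′(x)) d/dx)^n (I_{a+}^{n−α,φ} f)(x)`, `n = ⌊Re α⌋ + 1`. -/
def RLD (α : ℂ) (a : ℝ) (φ : ℝ → ℝ) (f : ℝ → ℂ) : ℝ → ℂ :=
  (phiD φ)^[rlN α] (RLI ((rlN α : ℂ) - α) a φ f)

open Classical in
/-- The integer `n` used in the modified Caputo-type derivative:
`n = α` if `α ∈ ℕ`, and `n = ⌊Re α⌋ + 1` otherwise. -/
def capN (α : ℂ) : ℕ := if ∃ n : ℕ, α = n then ⌊α.re⌋.toNat else ⌊α.re⌋.toNat + 1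

/-- The Taylor-type polynomial `Σ_{j<n} ((1/φ′) d/dt)^j f (a) / j! · (φ(t) − φ(a))^j`. -/
def phiTaylor (n : ℕ) (a : ℝ) (φ : ℝ → ℝ) (f : ℝ → ℂ) (t : ℝ) : ℂ :=
  ∑ j ∈ Finset.range n, ((phiD φ)^[j] f a / (Nat.factorial j : ℂ)) * ((φ t - φ a : ℝ) : ℂ) ^ j

/-- The modified Caputo-type fractional derivative with respect to `φ`. -/
def CapD (α : ℂ) (a : ℝ) (φ : ℝ → ℝ) (f : ℝ → ℂ) : ℝ → ℂ :=
  RLD α a φ (fun t => f t - phiTaylor (capN α) a φ f t)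

/-- `φ ∈ C¹[a,b]` with `φ′ > 0` on `[a,b]`. -/
structure IsC1Pos (φ : ℝ → ℝ) (a b : ℝ) : Prop where
  deriv_at : ∀ t ∈ Set.Icc a b, HasDerivAt φ (deriv φ t) t
  continuous_deriv : ContinuousOn (deriv φ) (Set.Icc a b)
  deriv_pos : ∀ t ∈ Set.Icc a b, 0 < deriv φ t

/-- The sup-norm on `[0,T]`. -/
def maxNorm (T : ℝ) (f : ℝ → ℂ) : ℝ := sSup ((fun t => ‖f t‖) '' Set.Icc 0 T)

/-- Membership in the space `C^{n₀−1,β₀}[0,T]`. -/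
def MemCspace (T : ℝ) (φ : ℝ → ℝ) (β0 : ℂ) (x : ℝ → ℂ) : Prop :=
  ContDiffOn ℝ (rlN β0 - 1 : ℕ) x (Set.Icc 0 T) ∧
    ContinuousOn (CapD β0 0 φ x) (Set.Icc 0 T)

/-- The norm of the space `C^{n₀−1,β₀}[0,T]`. -/
def normCspace (T : ℝ) (φ : ℝ → ℝ) (β0 : ℂ) (x : ℝ → ℂ) : ℝ :=
  (∑ k ∈ Finset.range (rlN β0), maxNorm T ((phiD φ)^[k] x)) + maxNorm T (CapD β0 0 φ x)

/-- The ordering assumptions on the orders `β₀, …, β_m`: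
`Re β₀ > Re β₁ > … > Re β_m ≥ 0`, and `β_m = 0` whenever `Re β_m = 0`. -/
def BetaChain (m : ℕ) (β : ℕ → ℂ) : Prop :=
  (∀ i < m, (β (i + 1)).re < (β i).re) ∧ 0 ≤ (β m).re ∧ ((β m).re = 0 → β m = 0)

/-- `x` solves `^C D^{β₀,φ} x(t) + Σ_{i=1}^m d_i(t) ^C D^{β_i,φ} x(t) = h(t)` on `[0,T]`. -/
def SolvesE (T : ℝ) (φ : ℝ → ℝ) (m : ℕ) (β : ℕ → ℂ) (d : ℕ → ℝ → ℂ) (h x : ℝ → ℂ) : Prop :=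
  ∀ t ∈ Set.Icc 0 T,
    CapD (β 0) 0 φ x t + ∑ i ∈ Finset.Icc 1 m, d i t * CapD (β i) 0 φ x t = h t

/-- The initial conditions `((1/φ′) d/dt)^k x (0+) = c_k`, `k = 0, …, n₀−1`. -/
def InitCond (φ : ℝ → ℝ) (n0 : ℕ) (c : ℕ → ℂ) (x : ℝ → ℂ) : Prop :=
  ∀ k < n0, Filter.Tendsto ((phiD φ)^[k] x) (nhdsWithin 0 (Set.Ioi 0)) (nhds (c k))

/-- The growth condition (G): there are `ν > 0` and `0 < C < 1` with
`Σ_{i=1}^m bound_i ‖(I^{β₀−β_i,φ} e^{ν·})(t)‖ ≤ C e^{ν t}` on `[0,T]`. -/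
def GrowthCond (T : ℝ) (φ : ℝ → ℝ) (m : ℕ) (β : ℕ → ℂ) (bound : ℕ → ℝ) : Prop :=
  ∃ ν : ℝ, 0 < ν ∧ ∃ C : ℝ, 0 < C ∧ C < 1 ∧ ∀ t ∈ Set.Icc 0 T,
    ∑ i ∈ Finset.Icc 1 m,
      bound i * ‖RLI (β 0 - β i) 0 φ (fun s => (Real.exp (ν * s) : ℂ)) t‖
      ≤ C * Real.exp (ν * t)

/-- The operator `f ↦ Σ_{i=1}^m d_i(·) I^{β₀−β_i,φ} f`. -/
def opS (φ : ℝ → ℝ) (m : ℕ) (β : ℕ → ℂ) (d : ℕ → ℝ → ℂ) (f : ℝ → ℂ) : ℝ → ℂ :=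
  fun t => ∑ i ∈ Finset.Icc 1 m, d i t * RLI (β 0 - β i) 0 φ f t

/-- The successive-approximation sequence `x₀ = I^{β₀,φ} h`,
`x_n = x₀ − I^{β₀,φ} Σ_i d_i ^C D^{β_i,φ} x_{n−1}`. -/
def apxSeq (φ : ℝ → ℝ) (m : ℕ) (β : ℕ → ℂ) (d : ℕ → ℝ → ℂ) (h : ℝ → ℂ) : ℕ → ℝ → ℂ
  | 0 => RLI (β 0) 0 φ h
  | n + 1 => fun t => RLI (β 0) 0 φ h t -
      RLI (β 0) 0 φ
        (fun s => ∑ i ∈ Finset.Icc 1 m, d i s * CapD (β i) 0 φ (apxSeq φ m β d h n) s) t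

/-- `Ψ_j(t) = (φ(t) − φ(0))^j / Γ(j+1)`. -/
def Psi (φ : ℝ → ℝ) (j : ℕ) (t : ℝ) : ℂ :=
  ((φ t - φ 0 : ℝ) : ℂ) ^ j / (Nat.factorial j : ℂ)

/-- The set `K_j = {i : 1 ≤ i ≤ m, Re β_i ≤ j}`. -/
def Kset (m : ℕ) (β : ℕ → ℂ) (j : ℕ) : Set ℕ :=
  {i : ℕ | 1 ≤ i ∧ i ≤ m ∧ (β i).re ≤ (j : ℝ)}

/-- `ϰ_j = min K_j`. -/
def kappa (m : ℕ) (β : ℕ → ℂ) (j : ℕ) : ℕ := sInf (Kset m β j)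

/-- `X` is a canonical set of solutions of the homogeneous equation (E₀). -/
def IsCanonicalSet (T : ℝ) (φ : ℝ → ℝ) (m : ℕ) (β : ℕ → ℂ) (d : ℕ → ℝ → ℂ)
    (X : ℕ → ℝ → ℂ) : Prop :=
  ∀ j < rlN (β 0),
    SolvesE T φ m β d (fun _ => 0) (X j) ∧
    ∀ k < rlN (β 0),
      Filter.Tendsto ((phiD φ)^[k] (X j)) (nhdsWithin 0 (Set.Ioi 0))
        (nhds (if k = j then 1 else 0))

/-- The multivariate Mittag-Leffler function `E_{(a₁,…,a_n),b}(z₁,…,z_n)`. -/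
def mvML (n : ℕ) (a : Fin n → ℂ) (b : ℂ) (z : Fin n → ℂ) : ℂ :=
  ∑' k : ℕ, ∑ l ∈ Finset.Nat.antidiagonalTuple n k,
    (Nat.multinomial Finset.univ l : ℂ) * (∏ i, z i ^ l i) /
      Complex.Gamma (b + ∑ i, a i * (l i : ℂ))

/-- `g ∈ AC^n[a,b]`: the `(n−1)`-st derivative of `g` is absolutely continuous on `[a,b]`. -/
def ACn (n : ℕ) (a b : ℝ) (g : ℝ → ℂ) : Prop :=
  ContDiffOn ℝ (n - 1 : ℕ) g (Set.Icc a b) ∧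
  ∃ g' : ℝ → ℂ, IntervalIntegrable g' volume a b ∧
    ∀ x ∈ Set.Icc a b, iteratedDeriv (n - 1) g x = iteratedDeriv (n - 1) g a + ∫ t in a..x, g' t

end FracDE

namespace FracDE

/-- The kernel `u ↦ u ^ (c - 1)` on `(0, ∞)`, extended by zero. -/
def powKernel (c : ℂ) : ℝ → ℂ :=
  (Set.Ioi (0 : ℝ)).indicator fun u => (u : ℂ) ^ (c - 1)

lemma powKernel_of_pos (c : ℂ) {u : ℝ} (hu : 0 < u) : powKernel c u = (u : ℂ) ^ (c - 1) :=
  Set.indicator_of_mem (Set.mem_Ioi.2 hu) _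

lemma powKernel_of_nonpos (c : ℂ) {u : ℝ} (hu : u ≤ 0) : powKernel c u = 0 :=
  Set.indicator_of_notMem (by simpa using hu) _

@[fun_prop]
lemma measurable_powKernel (c : ℂ) : Measurable (powKernel c) :=
  Measurable.indicator (by fun_prop) measurableSet_Ioi

lemma norm_powKernel_of_pos (c : ℂ) {u : ℝ} (hu : 0 < u) : ‖powKernel c u‖ = u ^ (c.re - 1) := by
  rw [powKernel_of_pos c hu, Complex.norm_cpow_eq_rpow_re_of_pos hu]
  simp

lemma ofReal_norm_powKernel (c : ℂ) (u : ℝ) :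
    ((‖powKernel c u‖ : ℝ) : ℂ) = powKernel (c.re : ℂ) u := by
  rcases le_or_gt u 0 with hu | hu
  · simp [powKernel_of_nonpos _ hu]
  · rw [norm_powKernel_of_pos c hu, powKernel_of_pos _ hu, Complex.ofReal_cpow hu.le]
    simp

/-- An integral over the line of a function supported in `(A, s)` is an interval integral. -/
lemma integral_eq_intervalIntegral {A s : ℝ} (hAs : A ≤ s) {F h : ℝ → ℂ}
    (hF : ∀ t ∈ Set.Ioo A s, F t = h t) (hF0 : ∀ t ∉ Set.Ioo A s, F t = 0) :
    ∫ t, F t = ∫ t in A..s, h t := by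
  rw [intervalIntegral.integral_of_le hAs, integral_Ioc_eq_integral_Ioo,
    ← setIntegral_congr_fun measurableSet_Ioo hF,
    setIntegral_eq_integral_of_forall_compl_eq_zero hF0]

lemma betaIntegral_ne_zero {γ δ : ℂ} (hγ : 0 < γ.re) (hδ : 0 < δ.re) :
    Complex.betaIntegral γ δ ≠ 0 := by
  intro h
  have := Complex.Gamma_mul_Gamma_eq_betaIntegral hγ hδ
  rw [h, mul_zero] at this
  exact mul_ne_zero (Complex.Gamma_ne_zero_of_re_pos hγ) (Complex.Gamma_ne_zero_of_re_pos hδ) this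

lemma integral_powKernel_mul_powKernel (γ δ : ℂ) (x t : ℝ) :
    ∫ s, powKernel δ (x - s) * powKernel γ (s - t) =
      powKernel (γ + δ) (x - t) * Complex.betaIntegral γ δ := by
  rcases le_or_gt x t with hxt | hxt
  · rw [powKernel_of_nonpos _ (sub_nonpos.2 hxt), zero_mul]
    refine integral_eq_zero_of_ae (.of_forall fun s => ?_)
    rcases le_or_gt s t with hst | hst
    · simp [powKernel_of_nonpos γ (sub_nonpos.2 hst)]
    · simp [powKernel_of_nonpos δ (show x - s ≤ 0 by linarith)]
  · rw [powKernel_of_pos _ (sub_pos.2 hxt), ← Complex.betaIntegral_scaled _ _ (sub_pos.2 hxt),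
      ← integral_add_right_eq_self _ t]
    refine integral_eq_intervalIntegral (sub_pos.2 hxt).le (fun u hu => ?_) fun u hu => ?_
    · rw [powKernel_of_pos δ (by linarith [hu.2]), powKernel_of_pos γ (by linarith [hu.1]), mul_comm]
      push_cast
      ring_nf
    · rcases le_or_gt u 0 with h | h
      · rw [powKernel_of_nonpos γ (by linarith), mul_zero]
      · have : x - (u + t) ≤ 0 := by
          by_contra! h'
          exact hu ⟨h, by linarith⟩
        simp [powKernel_of_nonpos δ this]

lemma integrable_powKernel_mul_powKernel {γ δ : ℂ} (hγ : 0 < γ.re) (hδ : 0 < δ.re) (x t : ℝ) :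
    Integrable fun s => powKernel δ (x - s) * powKernel γ (s - t) := by
  rcases le_or_gt x t with hxt | hxt
  · refine (integrable_zero ℝ ℂ volume).congr (.of_forall fun s => ?_)
    rcases le_or_gt s t with hst | hst
    · simp [powKernel_of_nonpos γ (sub_nonpos.2 hst)]
    · simp [powKernel_of_nonpos δ (show x - s ≤ 0 by linarith)]
  · refine Integrable.of_integral_ne_zero ?_
    rw [integral_powKernel_mul_powKernel, powKernel_of_pos _ (sub_pos.2 hxt)]
    refine mul_ne_zero ?_ (betaIntegral_ne_zero hγ hδ)
    rw [Ne, Complex.cpow_eq_zero_iff]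
    exact fun h => (sub_pos.2 hxt).ne' (Complex.ofReal_eq_zero.1 h.1)

lemma integral_norm_powKernel_mul_powKernel (γ δ : ℂ) (x t : ℝ) :
    ∫ s, ‖powKernel δ (x - s)‖ * ‖powKernel γ (s - t)‖ =
      ‖powKernel (γ + δ) (x - t)‖ * ‖Complex.betaIntegral γ.re δ.re‖ := by
  have h : ((∫ s, ‖powKernel δ (x - s)‖ * ‖powKernel γ (s - t)‖ : ℝ) : ℂ) =
      powKernel ((γ + δ).re : ℂ) (x - t) * Complex.betaIntegral γ.re δ.re := by
    rw [← integral_complex_ofReal]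
    simp only [Complex.ofReal_mul, ofReal_norm_powKernel]
    rw [integral_powKernel_mul_powKernel, Complex.add_re, Complex.ofReal_add]
  have h' := congrArg norm h
  rwa [Complex.norm_of_nonneg (integral_nonneg fun s => by positivity), norm_mul,
    ← ofReal_norm_powKernel, Complex.norm_real, norm_norm] at h'

/-- Absolute convergence of the double integral behind the semigroup law. -/
lemma integrable_prod_powKernel {γ δ : ℂ} (hγ : 0 < γ.re) (hδ : 0 < δ.re)
    (hγδ : 1 ≤ γ.re + δ.re) {A X : ℝ} {g : ℝ → ℂ} (hg : IntegrableOn g (Set.Ioc A X)) :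
    Integrable (Function.uncurry fun s t => powKernel δ (X - s) * (powKernel γ (s - t) *
      (Set.Ioc A X).indicator g t)) (volume.prod volume) := by
  have hG : Integrable ((Set.Ioc A X).indicator g) :=
    (integrable_indicator_iff measurableSet_Ioc).2 hg
  have hmeas : AEStronglyMeasurable (Function.uncurry fun s t => powKernel δ (X - s) *
      (powKernel γ (s - t) * (Set.Ioc A X).indicator g t)) (volume.prod volume) := by
    refine AEStronglyMeasurable.mul ?_ (AEStronglyMeasurable.mul ?_ hG.1.comp_snd)
    · exact Measurable.aestronglyMeasurable (by fun_prop)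
    · exact Measurable.aestronglyMeasurable (by fun_prop)
  rw [integrable_prod_iff' hmeas]
  refine ⟨.of_forall fun t => ?_, ?_⟩
  · simp only [Function.uncurry_apply_pair, ← mul_assoc]
    exact (integrable_powKernel_mul_powKernel hγ hδ X t).mul_const _
  · simp only [Function.uncurry_apply_pair, ← mul_assoc, norm_mul]
    simp only [integral_mul_const, integral_norm_powKernel_mul_powKernel]
    refine Integrable.mono' (hG.norm.const_mul
      ((X - A) ^ (γ.re + δ.re - 1) * ‖Complex.betaIntegral γ.re δ.re‖)) ?_ ?_
    · refine AEStronglyMeasurable.mul (AEStronglyMeasurable.mul ?_ ?_) hG.1.norm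
      · exact Measurable.aestronglyMeasurable (by fun_prop)
      · exact aestronglyMeasurable_const
    · refine .of_forall fun t => ?_
      simp only [norm_mul, norm_norm]
      by_cases ht : t ∈ Set.Ioc A X
      · gcongr
        rcases ht.2.eq_or_lt with h | h
        · rw [powKernel_of_nonpos _ (by linarith), norm_zero]
          exact Real.rpow_nonneg (by linarith [ht.1]) _
        · rw [norm_powKernel_of_pos _ (sub_pos.2 h), Complex.add_re]
          exact Real.rpow_le_rpow (by linarith) (by linarith [ht.1]) (by linarith)
      · simp [Set.indicator_of_notMem ht]

lemma integral_powKernel_mul_indicator (γ : ℂ) {A X s : ℝ} (hAs : A ≤ s) (hsX : s ≤ X)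
    (g : ℝ → ℂ) :
    ∫ t, powKernel γ (s - t) * (Set.Ioc A X).indicator g t =
      ∫ t in A..s, ((s - t : ℝ) : ℂ) ^ (γ - 1) * g t := by
  refine integral_eq_intervalIntegral hAs (fun t ht => ?_) fun t ht => ?_
  · rw [powKernel_of_pos _ (sub_pos.2 ht.2),
      Set.indicator_of_mem (Set.mem_Ioc.2 ⟨ht.1, ht.2.le.trans hsX⟩)]
  · rcases le_or_gt t A with h | h
    · rw [Set.indicator_of_notMem fun h' => h.not_gt h'.1, mul_zero]
    · rw [powKernel_of_nonpos _ (sub_nonpos.2 (not_lt.1 fun h' => ht ⟨h, h'⟩)), zero_mul]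

lemma integral_powKernel_mul_indicator_of_le (γ : ℂ) {A X s : ℝ} (hsA : s ≤ A) (g : ℝ → ℂ) :
    ∫ t, powKernel γ (s - t) * (Set.Ioc A X).indicator g t = 0 := by
  refine integral_eq_zero_of_ae (.of_forall fun t => ?_)
  rcases le_or_gt t A with h | h
  · simp [Set.indicator_of_notMem fun h' : t ∈ Set.Ioc A X => h.not_gt h'.1]
  · simp [powKernel_of_nonpos γ (show s - t ≤ 0 by linarith)]

/-- The semigroup law for unnormalised fractional integrals. -/
lemma integral_cpow_mul_integral_cpow {γ δ : ℂ} (hγ : 0 < γ.re) (hδ : 0 < δ.re)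
    (hγδ : 1 ≤ γ.re + δ.re) {A X : ℝ} (hAX : A ≤ X) {g : ℝ → ℂ}
    (hg : IntegrableOn g (Set.Ioc A X)) :
    ∫ s in A..X, ((X - s : ℝ) : ℂ) ^ (δ - 1) * ∫ t in A..s, ((s - t : ℝ) : ℂ) ^ (γ - 1) * g t =
      Complex.betaIntegral γ δ * ∫ t in A..X, ((X - t : ℝ) : ℂ) ^ (γ + δ - 1) * g t := by
  have hswap := integral_integral_swap (integrable_prod_powKernel hγ hδ hγδ hg)
  have hleft : ∫ s, ∫ t, powKernel δ (X - s) * (powKernel γ (s - t) *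
      (Set.Ioc A X).indicator g t) = ∫ s in A..X, ((X - s : ℝ) : ℂ) ^ (δ - 1) *
        ∫ t in A..s, ((s - t : ℝ) : ℂ) ^ (γ - 1) * g t := by
    refine integral_eq_intervalIntegral hAX (fun s hs => ?_) fun s hs => ?_
    · rw [integral_const_mul, integral_powKernel_mul_indicator γ hs.1.le hs.2.le,
        powKernel_of_pos _ (sub_pos.2 hs.2)]
    · rw [integral_const_mul]
      rcases le_or_gt s A with h | h
      · rw [integral_powKernel_mul_indicator_of_le γ h, mul_zero]
      · rw [powKernel_of_nonpos _ (sub_nonpos.2 (not_lt.1 fun h' => hs ⟨h, h'⟩)), zero_mul]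
  rw [← hleft, hswap, ← integral_powKernel_mul_indicator _ hAX le_rfl, ← integral_const_mul]
  simp only [← mul_assoc, integral_mul_const, integral_powKernel_mul_powKernel]
  simp only [mul_comm]

lemma integrableOn_integral_cpow {γ : ℂ} (hγ : 0 < γ.re) {A X : ℝ} {g : ℝ → ℂ}
    (hg : IntegrableOn g (Set.Ioc A X)) :
    IntegrableOn (fun s => ∫ t in A..s, ((s - t : ℝ) : ℂ) ^ (γ - 1) * g t) (Set.Icc A X) := by
  have h := (integrable_prod_powKernel (δ := 1) hγ (by simp) (by simp [hγ.le]) hg).integral_prod_left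
  rw [integrableOn_Icc_iff_integrableOn_Ioo]
  refine h.integrableOn.congr_fun (fun s hs => ?_) measurableSet_Ioo
  simp only [Function.uncurry_apply_pair, integral_const_mul]
  rw [integral_powKernel_mul_indicator γ hs.1.le hs.2.le, powKernel_of_pos _ (sub_pos.2 hs.2)]
  simp

variable {φ : ℝ → ℝ} {a b : ℝ} {f : ℝ → ℂ}

lemma IsC1Pos.mono (hφ : IsC1Pos φ a b) {x : ℝ} (hx : x ≤ b) : IsC1Pos φ a x where
  deriv_at t ht := hφ.deriv_at t ⟨ht.1, ht.2.trans hx⟩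
  continuous_deriv := hφ.continuous_deriv.mono (Set.Icc_subset_Icc_right hx)
  deriv_pos t ht := hφ.deriv_pos t ⟨ht.1, ht.2.trans hx⟩

lemma IsC1Pos.continuousOn (hφ : IsC1Pos φ a b) : ContinuousOn φ (Set.Icc a b) :=
  fun t ht => (hφ.deriv_at t ht).continuousAt.continuousWithinAt

lemma IsC1Pos.strictMonoOn (hφ : IsC1Pos φ a b) : StrictMonoOn φ (Set.Icc a b) :=
  strictMonoOn_of_deriv_pos (convex_Icc a b) hφ.continuousOn
    fun t ht => hφ.deriv_pos t (interior_subset ht)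

lemma IsC1Pos.integral_comp (hφ : IsC1Pos φ a b) (hab : a ≤ b) (g : ℝ → ℂ) :
    ∫ t in a..b, ((deriv φ t : ℝ) : ℂ) * g (φ t) = ∫ u in φ a..φ b, g u := by
  have hmono := hφ.strictMonoOn.monotoneOn (Set.left_mem_Icc.2 hab) (Set.right_mem_Icc.2 hab) hab
  rw [intervalIntegral.integral_of_le hab, intervalIntegral.integral_of_le hmono,
    ← integral_Icc_eq_integral_Ioc, ← integral_Icc_eq_integral_Ioc,
    ← integral_Icc_deriv_smul_of_deriv_nonneg hφ.continuousOn
      (fun t ht => hφ.deriv_at t (Set.Ioo_subset_Icc_self ht))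
      (fun t ht => (hφ.deriv_pos t (Set.Ioo_subset_Icc_self ht)).le) hab]
  simp

lemma IsC1Pos.integrableOn_comp_iff (hφ : IsC1Pos φ a b) (hab : a ≤ b) (g : ℝ → ℂ) :
    IntegrableOn (fun t => ((deriv φ t : ℝ) : ℂ) * g (φ t)) (Set.Icc a b) ↔
      IntegrableOn g (Set.Icc (φ a) (φ b)) := by
  rw [← integrableOn_Icc_deriv_smul_iff_of_deriv_nonneg hφ.continuousOn
      (fun t ht => hφ.deriv_at t (Set.Ioo_subset_Icc_self ht))
      (fun t ht => (hφ.deriv_pos t (Set.Ioo_subset_Icc_self ht)).le) hab]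
  simp

/-- A left inverse of `φ` on `[a, b]`. -/
def invPhi (φ : ℝ → ℝ) (a b : ℝ) : ℝ → ℝ := Function.invFunOn φ (Set.Icc a b)

lemma IsC1Pos.invPhi_apply (hφ : IsC1Pos φ a b) {t : ℝ} (ht : t ∈ Set.Icc a b) :
    invPhi φ a b (φ t) = t :=
  hφ.strictMonoOn.injOn.leftInvOn_invFunOn ht

/-- The change of variables `u = φ t` in the fractional integral. -/
lemma IsC1Pos.RLI_eq (hφ : IsC1Pos φ a b) (γ : ℂ) (f : ℝ → ℂ) {x : ℝ} (hx : x ∈ Set.Icc a b) :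
    RLI γ a φ f x = (Complex.Gamma γ)⁻¹ *
      ∫ u in φ a..φ x, ((φ x - u : ℝ) : ℂ) ^ (γ - 1) * f (invPhi φ a b u) := by
  rw [RLI, ← (hφ.mono hx.2).integral_comp hx.1]
  congr 1
  refine intervalIntegral.integral_congr fun t ht => ?_
  rw [Set.uIcc_of_le hx.1] at ht
  simp only [hφ.invPhi_apply ⟨ht.1, ht.2.trans hx.2⟩, mul_assoc]

lemma IsC1Pos.integrableOn_invPhi (hφ : IsC1Pos φ a b) (hab : a ≤ b)
    (hf : IntegrableOn f (Set.Icc a b)) :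
    IntegrableOn (fun u => f (invPhi φ a b u)) (Set.Icc (φ a) (φ b)) := by
  rw [← hφ.integrableOn_comp_iff hab]
  refine IntegrableOn.congr_fun (f := fun t => ((deriv φ t : ℝ) : ℂ) * f t) ?_ (fun t ht => ?_)
    measurableSet_Icc
  · exact hf.continuousOn_mul (Complex.continuous_ofReal.comp_continuousOn hφ.continuous_deriv)
      isCompact_Icc
  · simp only [hφ.invPhi_apply ht]

lemma IsC1Pos.integrableOn_RLI (hφ : IsC1Pos φ a b) (hab : a ≤ b)
    (hf : IntegrableOn f (Set.Icc a b)) {γ : ℂ} (hγ : 0 < γ.re) :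
    IntegrableOn (fun t => ((deriv φ t : ℝ) : ℂ) * RLI γ a φ f t) (Set.Icc a b) := by
  have h := (integrableOn_integral_cpow hγ
    ((hφ.integrableOn_invPhi hab hf).mono_set Set.Ioc_subset_Icc_self)).const_mul
    (Complex.Gamma γ)⁻¹
  refine ((hφ.integrableOn_comp_iff hab _).2 h).congr_fun (fun t ht => ?_) measurableSet_Icc
  simp only [hφ.RLI_eq γ f ht]

/-- The semigroup law, valid at every point because the total order is at least one. -/
lemma IsC1Pos.RLI_RLI (hφ : IsC1Pos φ a b) (hf : IntegrableOn f (Set.Icc a b)) {γ δ : ℂ}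
    (hγ : 0 < γ.re) (hδ : 0 < δ.re) (hγδ : 1 ≤ γ.re + δ.re) {x : ℝ} (hx : x ∈ Set.Icc a b) :
    RLI δ a φ (RLI γ a φ f) x = RLI (γ + δ) a φ f x := by
  have hab := hx.1.trans hx.2
  have hmono := hφ.strictMonoOn.monotoneOn
  have hle := hmono (Set.left_mem_Icc.2 hab) hx hx.1
  have hg := (hφ.integrableOn_invPhi hab hf).mono_set (Set.Ioc_subset_Icc_self.trans
    (Set.Icc_subset_Icc_right (hmono hx (Set.right_mem_Icc.2 hab) hx.2)))
  have hinner : ∫ u in φ a..φ x, ((φ x - u : ℝ) : ℂ) ^ (δ - 1) * RLI γ a φ f (invPhi φ a b u) =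
      (Complex.Gamma γ)⁻¹ * ∫ s in φ a..φ x, ((φ x - s : ℝ) : ℂ) ^ (δ - 1) *
        ∫ t in φ a..s, ((s - t : ℝ) : ℂ) ^ (γ - 1) * f (invPhi φ a b t) := by
    rw [← intervalIntegral.integral_const_mul]
    refine intervalIntegral.integral_congr fun u hu => ?_
    rw [Set.uIcc_of_le hle] at hu
    obtain ⟨s, hs, rfl⟩ := intermediate_value_Icc hx.1 (hφ.mono hx.2).continuousOn hu
    have hs' : s ∈ Set.Icc a b := ⟨hs.1, hs.2.trans hx.2⟩
    simp only [hφ.invPhi_apply hs', hφ.RLI_eq γ f hs']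
    ring
  rw [hφ.RLI_eq δ _ hx, hinner, integral_cpow_mul_integral_cpow hγ hδ hγδ hle hg,
    hφ.RLI_eq (γ + δ) f hx]
  have hΓ := Complex.Gamma_mul_Gamma_eq_betaIntegral hγ hδ
  have h₁ := Complex.Gamma_ne_zero_of_re_pos hγ
  have h₂ := Complex.Gamma_ne_zero_of_re_pos hδ
  have h₃ : Complex.Gamma (γ + δ) ≠ 0 :=
    Complex.Gamma_ne_zero_of_re_pos (by rw [Complex.add_re]; linarith)
  have hB : (Complex.Gamma δ)⁻¹ * (Complex.Gamma γ)⁻¹ * Complex.betaIntegral γ δ =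
      (Complex.Gamma (γ + δ))⁻¹ := by
    field_simp
    linear_combination -hΓ
  rw [← hB]
  ring

lemma IsC1Pos.RLI_add_one (hφ : IsC1Pos φ a b) (hf : IntegrableOn f (Set.Icc a b)) {γ : ℂ}
    (hγ : 0 < γ.re) {x : ℝ} (hx : x ∈ Set.Icc a b) :
    RLI (γ + 1) a φ f x = ∫ t in a..x, ((deriv φ t : ℝ) : ℂ) * RLI γ a φ f t := by
  rw [← hφ.RLI_RLI hf hγ (by simp) (by simp [hγ.le]) hx, RLI]
  simp

lemma phiD_eq_of_hasDerivAt {F : ℝ → ℂ} {c : ℂ} {x : ℝ} (hx : deriv φ x ≠ 0)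
    (h : HasDerivAt F (((deriv φ x : ℝ) : ℂ) * c) x) : phiD φ F x = c := by
  rw [phiD, h.deriv, inv_mul_cancel_left₀ (Complex.ofReal_ne_zero.2 hx)]

lemma IsC1Pos.continuousOn_RLI (hφ : IsC1Pos φ a b) (hf : IntegrableOn f (Set.Icc a b)) {γ : ℂ}
    (hγ : 1 < γ.re) : ContinuousOn (RLI γ a φ f) (Set.Icc a b) := by
  rcases lt_or_ge b a with hab | hab
  · simp [Set.Icc_eq_empty_of_lt hab]
  have hγ' : 0 < (γ - 1).re := by simpa using hγ
  refine (intervalIntegral.continuousOn_primitive_interval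
    (Set.uIcc_of_le hab ▸ hφ.integrableOn_RLI hab hf hγ') |>.mono
      (Set.uIcc_of_le hab).ge).congr fun x hx => ?_
  simpa using hφ.RLI_add_one hf hγ' hx

lemma IsC1Pos.eqOn_phiD (hφ : IsC1Pos φ a b) (hf : IntegrableOn f (Set.Icc a b)) {γ : ℂ}
    (hγ : 1 < γ.re) {F : ℝ → ℂ} (hF : Set.EqOn F (RLI (γ + 1) a φ f) (Set.Ioo a b)) :
    Set.EqOn (phiD φ F) (RLI γ a φ f) (Set.Ioo a b) := by
  intro x hx
  have hab : a ≤ b := (hx.1.trans hx.2).le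
  have hγ' : 0 < γ.re := by linarith
  have hcont : ContinuousOn (fun t => ((deriv φ t : ℝ) : ℂ) * RLI γ a φ f t) (Set.Icc a b) :=
    (Complex.continuous_ofReal.comp_continuousOn hφ.continuous_deriv).mul
      (hφ.continuousOn_RLI hf hγ)
  refine phiD_eq_of_hasDerivAt (hφ.deriv_pos x (Set.Ioo_subset_Icc_self hx)).ne' ?_
  have hderiv : HasDerivAt (fun y => ∫ t in a..y, ((deriv φ t : ℝ) : ℂ) * RLI γ a φ f t)
      (((deriv φ x : ℝ) : ℂ) * RLI γ a φ f x) x := by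
    refine intervalIntegral.integral_hasDerivAt_right ?_ ?_ ?_
    · exact (hcont.mono (Set.Icc_subset_Icc_right hx.2.le)).intervalIntegrable_of_Icc hx.1.le
    · exact (hcont.mono Set.Ioo_subset_Icc_self).stronglyMeasurableAtFilter isOpen_Ioo x hx
    · exact hcont.continuousAt (Icc_mem_nhds hx.1 hx.2)
  refine hderiv.congr_of_eventuallyEq ?_
  filter_upwards [Ioo_mem_nhds hx.1 hx.2] with y hy
  rw [hF hy, hφ.RLI_add_one hf hγ' (Set.Ioo_subset_Icc_self hy)]

lemma IsC1Pos.eqOn_phiD_iterate (hφ : IsC1Pos φ a b) (hf : IntegrableOn f (Set.Icc a b)) {γ : ℂ}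
    (hγ : 1 < γ.re) (n : ℕ) {F : ℝ → ℂ}
    (hF : Set.EqOn F (RLI (γ + n) a φ f) (Set.Ioo a b)) :
    Set.EqOn ((phiD φ)^[n] F) (RLI γ a φ f) (Set.Ioo a b) := by
  induction n generalizing F with
  | zero => simpa using hF
  | succ n ih =>
    rw [Function.iterate_succ_apply]
    refine ih (hφ.eqOn_phiD hf ?_ ?_)
    · rw [Complex.add_re, Complex.natCast_re]
      have : (0 : ℝ) ≤ n := n.cast_nonneg
      linarith
    · simpa [add_assoc] using hF

lemma IsC1Pos.ae_phiD_eq (hφ : IsC1Pos φ a b) (hab : a ≤ b) (hf : IntegrableOn f (Set.Icc a b))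
    {γ : ℂ} (hγ : 0 < γ.re) {F : ℝ → ℂ}
    (hF : Set.EqOn F (RLI (γ + 1) a φ f) (Set.Ioo a b)) :
    ∀ᵐ x, x ∈ Set.Ioo a b → phiD φ F x = RLI γ a φ f x := by
  have hint : IntervalIntegrable (fun t => ((deriv φ t : ℝ) : ℂ) * RLI γ a φ f t) volume a b :=
    (intervalIntegrable_iff_integrableOn_Icc_of_le hab).2 (hφ.integrableOn_RLI hab hf hγ)
  filter_upwards [hint.ae_hasDerivAt_integral] with x hderiv hx
  have hx' : x ∈ Set.Icc a b := Set.Ioo_subset_Icc_self hx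
  refine phiD_eq_of_hasDerivAt (hφ.deriv_pos x hx').ne' ?_
  refine (hderiv (Set.uIcc_of_le hab ▸ hx') a Set.left_mem_uIcc).congr_of_eventuallyEq ?_
  filter_upwards [Ioo_mem_nhds hx.1 hx.2] with y hy
  rw [hF hy, hφ.RLI_add_one hf hγ (Set.Ioo_subset_Icc_self hy)]

end FracDE


/-- For `Re α > Re β > 0` and `f ∈ L¹(a,b)`,
`D_{a+}^{β,φ} I_{a+}^{α,φ} f = I_{a+}^{α−β,φ} f` a.e. on `[a,b]`. -/
theorem statement2 (α β : ℂ) (hβ : 0 < β.re) (hαβ : β.re < α.re)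
    (a b : ℝ) (hab : a < b) (φ : ℝ → ℝ) (hφ : FracDE.IsC1Pos φ a b)
    (f : ℝ → ℂ) (hf : MeasureTheory.IntegrableOn f (Set.Icc a b)) :
    ∀ᵐ x ∂(volume : Measure ℝ), x ∈ Set.Icc a b →
      FracDE.RLD β a φ (FracDE.RLI α a φ f) x = FracDE.RLI (α - β) a φ f x := by
  have hγ : 0 < (α - β).re := by simpa using hαβ
  have hN : β.re < (FracDE.rlN β : ℝ) := by
    rw [FracDE.rlN, Nat.cast_add_one, ← Int.cast_natCast,
      Int.toNat_of_nonneg (Int.floor_nonneg.2 hβ.le)]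
    exact Int.lt_floor_add_one _
  have hδ : 0 < ((FracDE.rlN β : ℂ) - β).re := by simpa using hN
  have hone : (1 : ℝ) ≤ FracDE.rlN β := by simp [FracDE.rlN]
  have hsemi : Set.EqOn (FracDE.RLI (FracDE.rlN β - β) a φ (FracDE.RLI α a φ f))
      (FracDE.RLI (α - β + 1 + (⌊β.re⌋.toNat : ℕ)) a φ f) (Set.Ioo a b) := by
    intro x hx
    rw [hφ.RLI_RLI hf (hβ.trans hαβ) hδ ?_ (Set.Ioo_subset_Icc_self hx)]
    · congr 1
      rw [FracDE.rlN]
      push_cast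
      ring
    · rw [Complex.sub_re, Complex.natCast_re]
      linarith
  have hiter := hφ.eqOn_phiD_iterate hf (γ := α - β + 1) (by simpa using hαβ) _ hsemi
  filter_upwards [hφ.ae_phiD_eq hab.le hf hγ hiter, Ioo_ae_eq_Icc (a := a) (b := b).mem_iff]
    with x hx hmem hxI
  rw [FracDE.RLD]
  conv_lhs => rw [FracDE.rlN]
  rw [Function.iterate_succ_apply']
  exact hx (hmem.2 hxI)
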